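/- Let P be a normal logic program over atoms a_1, …, a_n, let ⊗ be a t-norm and ⊕ a t-conorm, and let τ, φ ∈ {0,1}^n be binary degree vectors. Let T = [τ] and F = [φ] be the induced atom sets. Then the set induced by one application of the soft immediate consequence operator equals one application of the classical immediate consequence operator: [𝒞_{P,φ}(τ)] = C_{P,𝒜∖F}(T). -/

import Mathlib

instance : Fact ((0:ℝ) ≤ 1) := ⟨zero_le_one⟩

/-- A rule of a normal logic program: head atom, positive body atoms, default-negated body atoms. -/
structure Rule (α : Type) where
  head : α
  pos : Finset α
  neg : Finset α
deriving DecidableEq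

/-- A t-norm on the unit interval: commutative, associative, monotone in each argument,
with unit `1`. -/
structure Tnorm where
  f : unitInterval → unitInterval → unitInterval
  comm : ∀ x y, f x y = f y x
  assoc : ∀ x y z, f (f x y) z = f x (f y z)
  mono : ∀ ⦃x x' y y'⦄, x ≤ x' → y ≤ y' → f x y ≤ f x' y'
  one_left : ∀ x, f 1 x = x

/-- A t-conorm on the unit interval: commutative, associative, monotone in each argument,
with unit `0`. -/
structure Tconorm where
  f : unitInterval → unitInterval → unitInterval
  comm : ∀ x y, f x y = f y x
  assoc : ∀ x y z, f (f x y) z = f x (f y z)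
  mono : ∀ ⦃x x' y y'⦄, x ≤ x' → y ≤ y' → f x y ≤ f x' y'
  zero_left : ∀ x, f 0 x = x

instance (t : Tnorm) : Std.Commutative t.f := ⟨t.comm⟩
instance (t : Tnorm) : Std.Associative t.f := ⟨t.assoc⟩
instance (s : Tconorm) : Std.Commutative s.f := ⟨s.comm⟩
instance (s : Tconorm) : Std.Associative s.f := ⟨s.assoc⟩

/-- ⊗-product of `g` over a finite set (empty product = `1`). -/
def tnormProd {β : Type} (t : Tnorm) (g : β → unitInterval) (s : Finset β) : unitInterval :=
  s.fold t.f 1 g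

/-- ⊕-sum of `g` over a finite set (empty sum = `0`). -/
def tconormSum {β : Type} (s : Tconorm) (g : β → unitInterval) (q : Finset β) : unitInterval :=
  q.fold s.f 0 g

/-- Support `ρ(τ,φ)` of a rule: the ⊗-product of the values of all its body literals,
where `val(a) = τ a` and `val(not a) = φ a`. -/
def support {α : Type} (t : Tnorm) (τ φ : α → unitInterval) (r : Rule α) : unitInterval :=
  t.f (tnormProd t τ r.pos) (tnormProd t φ r.neg)

/-- The soft immediate consequence operator `𝒞_{P,φ}(τ)`: for each atom `a`, the ⊕-sum of
the supports of all rules with head `a`. -/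
def softC {α : Type} [DecidableEq α] (t : Tnorm) (s : Tconorm) (P : Finset (Rule α))
    (φ τ : α → unitInterval) : α → unitInterval :=
  fun a => tconormSum s (support t τ φ) (P.filter fun r => r.head = a)

/-- The set induced by a degree vector: `[ψ] = { a | ψ a = 1 }`. -/
def induced {α : Type} (ψ : α → unitInterval) : Set α := { a | ψ a = 1 }

/-- The classical immediate consequence operator `C_{P,J}(I)`. -/
def imCons {α : Type} (P : Finset (Rule α)) (J I : Set α) : Set α :=
  { a | ∃ r ∈ P, r.head = a ∧ ↑r.pos ⊆ I ∧ ∀ b ∈ r.neg, b ∉ J }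

theorem tn_zero (t : Tnorm) (x : unitInterval) : t.f 0 x = 0 := by
  apply le_antisymm _ unitInterval.nonneg'
  have h := t.mono (le_refl (0 : unitInterval)) (unitInterval.le_one' (t := x))
  rwa [t.comm 0 1, t.one_left] at h

theorem tc_one (s : Tconorm) (x : unitInterval) : s.f 1 x = 1 := by
  apply le_antisymm unitInterval.le_one'
  have h := s.mono (le_refl (1 : unitInterval)) (unitInterval.nonneg' (t := x))
  rwa [s.comm 1 0, s.zero_left] at h

theorem tn_crisp (t : Tnorm) (x y : unitInterval) (hx : x = 0 ∨ x = 1) (hy : y = 0 ∨ y = 1) :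
    (t.f x y = 0 ∨ t.f x y = 1) ∧ (t.f x y = 1 ↔ x = 1 ∧ y = 1) := by
  rcases hx with rfl | rfl
  · simp [tn_zero]
  · simp [t.one_left, hy]

theorem tc_crisp (s : Tconorm) (x y : unitInterval) (hx : x = 0 ∨ x = 1) (hy : y = 0 ∨ y = 1) :
    (s.f x y = 0 ∨ s.f x y = 1) ∧ (s.f x y = 1 ↔ x = 1 ∨ y = 1) := by
  rcases hx with rfl | rfl
  · simp [s.zero_left, hy]
  · simp [tc_one]

theorem prod_crisp {β : Type} (t : Tnorm) (g : β → unitInterval) (hg : ∀ b, g b = 0 ∨ g b = 1)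
    (q : Finset β) : (tnormProd t g q = 0 ∨ tnormProd t g q = 1) ∧
      (tnormProd t g q = 1 ↔ ∀ b ∈ q, g b = 1) := by
  classical
  induction q using Finset.induction_on with
  | empty => simp [tnormProd]
  | insert a q ha ih =>
    have e : tnormProd t g (insert a q) = t.f (g a) (tnormProd t g q) := Finset.fold_insert ha
    have h := tn_crisp t _ _ (hg a) ih.1
    rw [e]
    exact ⟨h.1, by rw [h.2, ih.2]; simp⟩

theorem sum_crisp {β : Type} (s : Tconorm) (g : β → unitInterval) (hg : ∀ b, g b = 0 ∨ g b = 1)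
    (q : Finset β) : (tconormSum s g q = 0 ∨ tconormSum s g q = 1) ∧
      (tconormSum s g q = 1 ↔ ∃ b ∈ q, g b = 1) := by
  classical
  induction q using Finset.induction_on with
  | empty => simp [tconormSum]
  | insert a q ha ih =>
    have e : tconormSum s g (insert a q) = s.f (g a) (tconormSum s g q) := Finset.fold_insert ha
    have h := tc_crisp s _ _ (hg a) ih.1
    rw [e]
    exact ⟨h.1, by rw [h.2, ih.2]; simp⟩

/-- For binary degree vectors `τ, φ`, the set induced by one application
of the soft immediate consequence operator equals one application of the classical
immediate consequence operator: `[𝒞_{P,φ}(τ)] = C_{P,𝒜∖F}(T)` with `T = [τ]`, `F = [φ]`. -/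
theorem crisp_softC_eq_imCons {α : Type} [Fintype α] [DecidableEq α]
    (t : Tnorm) (s : Tconorm) (P : Finset (Rule α)) (τ φ : α → unitInterval)
    (hτ : ∀ a, τ a = 0 ∨ τ a = 1) (hφ : ∀ a, φ a = 0 ∨ φ a = 1) :
    induced (softC t s P φ τ) = imCons P (Set.univ \ induced φ) (induced τ) := by
  have hs : ∀ r, (support t τ φ r = 0 ∨ support t τ φ r = 1) ∧
      (support t τ φ r = 1 ↔ (∀ b ∈ r.pos, τ b = 1) ∧ ∀ b ∈ r.neg, φ b = 1) := by
    intro r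
    have h := tn_crisp t _ _ (prod_crisp t τ hτ r.pos).1 (prod_crisp t φ hφ r.neg).1
    rw [(prod_crisp t τ hτ r.pos).2, (prod_crisp t φ hφ r.neg).2] at h
    exact h
  ext a
  have h := (sum_crisp s (support t τ φ) (fun r => (hs r).1) (P.filter fun r => r.head = a)).2
  change tconormSum s _ _ = 1 ↔ _
  rw [h]
  simp only [hs, imCons, induced, Finset.mem_filter, Set.mem_setOf_eq, Set.mem_diff, Set.mem_univ,
    true_and, not_not, Set.subset_def, Finset.mem_coe, and_assoc]
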